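/- Let β > 0 and let k be an integer with 1 ≤ k ≤ 4. If F ⊂ ℝ⁴ is a bounded set that does not β-span a k-dimensional affine subspace, then there exists a (k−1)-dimensional affine subspace V ⊂ ℝ⁴ such that F is contained in the closed 2β-neighborhood of V, i.e. every point of F has distance at most 2β from V. -/

import Mathlib

open Metric

noncomputable section

abbrev E4 := EuclideanSpace ℝ (Fin 4)

/-- `F` β-spans a `k`-dimensional affine subspace: `F` contains `k+1` points that are
β-linearly independent, i.e. each of them has distance at least `β` from the affine
span of the remaining `k` points. -/
def BetaSpans (F : Set E4) (β : ℝ) (k : ℕ) : Prop :=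
  ∃ p : Fin (k + 1) → E4, (∀ i, p i ∈ F) ∧
    ∀ j, β ≤ Metric.infDist (p j)
      ((affineSpan ℝ (p '' ({j}ᶜ)) : AffineSubspace ℝ E4) : Set E4)

/-- Bordered Gram matrix of a family of points. -/
def bGram {n : ℕ} (p : Fin n → E4) : Matrix (Option (Fin n)) (Option (Fin n)) ℝ :=
  fun a b => match a, b with
    | none, none => 0
    | none, some _ => 1
    | some _, none => 1
    | some i, some j => inner ℝ (p i) (p j)

/-- The cofactor at vertex `j`. -/
def bCof {n : ℕ} (p : Fin n → E4) (j : Fin n) : ℝ :=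
  ((bGram p).updateRow (some j) (Pi.single (some j) 1)).det

theorem bCof_update {n : ℕ} (p : Fin n → E4) (j : Fin n) (x : E4) :
    bCof (Function.update p j x) j = bCof p j := by
  unfold bCof
  refine Matrix.det_eq_of_forall_row_eq_smul_add_const
    (fun a => if a = some j then 0 else
      bGram (Function.update p j x) a (some j) - bGram p a (some j)) (some j) (by simp) ?_
  intro a b
  by_cases ha : a = some j
  · subst ha; simp
  · simp only [Matrix.updateRow_ne ha, Matrix.updateRow_self, if_neg ha]
    by_cases hb : b = some j
    · subst hb; simp
    · rw [Pi.single_eq_of_ne hb]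
      rcases a with _ | a <;> rcases b with _ | b <;> simp [bGram]
      have h1 : a ≠ j := fun h => ha (by rw [h])
      have h2 : b ≠ j := fun h => hb (by rw [h])
      simp [Function.update_of_ne h1, Function.update_of_ne h2]

theorem bGram_det {n : ℕ} (p : Fin n → E4) (j b : Fin n) (hb : b ≠ j) :
    (bGram p).det = (Metric.infDist (p j)
      ((affineSpan ℝ (p '' ({j}ᶜ)) : AffineSubspace ℝ E4) : Set E4)) ^ 2 * bCof p j := by
  classical
  set V := affineSpan ℝ (p '' ({j}ᶜ)) with hV
  have hmem : ∀ i, i ≠ j → p i ∈ V := fun i hi => subset_affineSpan ℝ _ ⟨i, hi, rfl⟩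
  have : Nonempty V := ⟨⟨p b, hmem b hb⟩⟩
  rw [← EuclideanGeometry.dist_orthogonalProjection_eq_infDist]
  obtain ⟨fs, c, hfs, hc1, hc⟩ := eq_affineCombination_of_mem_affineSpan_image
    (EuclideanGeometry.orthogonalProjection_mem (s := V) (p j))
  have horth := EuclideanGeometry.vsub_orthogonalProjection_mem_direction_orthogonal V (p j)
  have hymem := EuclideanGeometry.orthogonalProjection_mem (s := V) (p j)
  rw [Finset.affineCombination_eq_linear_combination _ _ _ hc1] at hc
  set y : E4 := (EuclideanGeometry.orthogonalProjection V (p j) : E4) with hy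
  rw [vsub_eq_sub] at horth
  have hw : ∀ u ∈ V, inner ℝ (p j - y) (u - p b) = 0 := by
    intro u hu
    exact (Submodule.mem_orthogonal' _ _).1 horth _
      (AffineSubspace.vsub_mem_direction hu (hmem b hb))
  set d : Fin n → ℝ := fun i => if i ∈ fs then c i else 0 with hd
  have hdj : d j = 0 := by
    have : j ∉ fs := fun h => hfs (Finset.mem_coe.2 h) rfl
    simp [hd, this]
  have hd1 : ∑ i, d i = 1 := by simp [hd, hc1]
  have hdy : y = ∑ i, d i • p i := by simp [hd, hc, ite_smul]
  have key := Matrix.det_updateRow_sum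
    ((bGram p).updateRow (some j) (Pi.single (some j) 1)) (some j)
    (fun a => match a with
      | none => inner ℝ (p j - y) (p b)
      | some i => if i = j then dist (p j) y ^ 2 else d i)
  simp only [if_true, smul_eq_mul] at key
  unfold bCof
  rw [← key, Matrix.updateRow_idem]
  congr 1
  ext a e
  by_cases ha : a = some j
  swap
  · rw [Matrix.updateRow_ne ha]
  subst ha
  rw [Matrix.updateRow_self, Fintype.sum_option]
  have hsum : ∀ e, (∑ i, (if i = j then dist (p j) y ^ 2 else d i) •
      ((bGram p).updateRow (some j) (Pi.single (some j) 1)) (some i)) e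
      = (∑ i, d i * bGram p (some i) e) + dist (p j) y ^ 2 * (Pi.single (some j) (1:ℝ) : Option (Fin n) → ℝ) e := by
    intro e
    rw [Finset.sum_apply, ← Finset.add_sum_erase _ _ (Finset.mem_univ j),
      ← Finset.add_sum_erase (a := j) (f := fun i => d i * bGram p (some i) e) _ (Finset.mem_univ j), hdj]
    simp only [if_true, Pi.smul_apply, Matrix.updateRow_self, smul_eq_mul, zero_mul, zero_add]
    rw [add_comm]
    congr 1
    refine Finset.sum_congr rfl fun i hi => ?_
    have hij : i ≠ j := Finset.ne_of_mem_erase hi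
    rw [if_neg hij, Matrix.updateRow_ne (by simpa using hij)]
  rw [Pi.add_apply, hsum]
  simp only [Pi.smul_apply, smul_eq_mul]
  rw [Matrix.updateRow_ne (by simp)]
  rcases e with _ | e
  · simp [bGram, hd1]
  · have h1 : ∑ i, d i * bGram p (some i) (some e) = inner ℝ y (p e) := by
      rw [hdy, sum_inner]
      simp [bGram, real_inner_smul_left]
    rw [h1]
    by_cases he : e = j
    · subst he
      have h2 := hw y hymem
      simp only [bGram, Pi.single_eq_same]
      rw [dist_eq_norm, ← real_inner_self_eq_norm_sq]
      simp only [inner_sub_left, inner_sub_right] at h2 ⊢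
      linarith [real_inner_comm (p e) y]
    · have h2 := hw _ (hmem e he)
      rw [Pi.single_eq_of_ne (by simpa using he)]
      simp only [bGram]
      simp only [inner_sub_left, inner_sub_right] at h2 ⊢
      linarith

theorem bGram_det_ne {n : ℕ} (p : Fin (n + 1) → E4) (hp : AffineIndependent ℝ p) :
    (bGram p).det ≠ 0 := by
  intro h0
  obtain ⟨v, hv, hMv⟩ := Matrix.exists_mulVec_eq_zero_iff.2 h0
  have hnone : ∑ i, v (some i) = 0 := by
    have := congrFun hMv none
    simpa [Matrix.mulVec, dotProduct, Fintype.sum_option, bGram] using this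
  have hsome : ∀ i, v none + inner ℝ (p i) (∑ j, v (some j) • p j) = 0 := by
    intro i
    have := congrFun hMv (some i)
    simp [Matrix.mulVec, dotProduct, Fintype.sum_option, bGram] at this
    rw [inner_sum]
    simpa [real_inner_smul_right, mul_comm] using this
  have hz : ∑ j, v (some j) • p j = 0 := by
    rw [← inner_self_eq_zero (𝕜 := ℝ)]
    nth_rewrite 1 [sum_inner]
    have : ∀ i, inner ℝ (v (some i) • p i) (∑ j, v (some j) • p j) = v (some i) * (- v none) := by
      intro i
      rw [real_inner_smul_left]
      congr 1
      linarith [hsome i]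
    simp only [this]
    rw [← Finset.sum_mul, hnone, zero_mul]
  have hc := affineIndependent_iff.1 hp Finset.univ (fun i => v (some i)) hnone hz
  apply hv
  ext a
  rcases a with _ | a
  · have := hsome 0
    rw [hz] at this
    simpa using this
  · exact hc a (Finset.mem_univ _)

theorem bGram_continuous (n : ℕ) :
    Continuous (fun p : Fin n → E4 => (bGram p).det) := by
  refine Continuous.matrix_det ?_
  refine continuous_pi fun a => continuous_pi fun b => ?_
  rcases a with _ | a <;> rcases b with _ | b <;> simp only [bGram] <;> fun_prop

theorem exists_ext_submodule (D : Submodule ℝ E4) (m : ℕ) (h1 : Module.finrank ℝ D ≤ m)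
    (h2 : m ≤ 4) : ∃ D' : Submodule ℝ E4, D ≤ D' ∧ Module.finrank ℝ D' = m := by
  induction m, h1 using Nat.le_induction with
  | base => exact ⟨D, le_rfl, rfl⟩
  | succ m hm ih =>
    obtain ⟨D', hD, hr⟩ := ih (by omega)
    have hne : D' ≠ ⊤ := by
      rintro rfl
      rw [finrank_top, finrank_euclideanSpace_fin] at hr
      omega
    obtain ⟨v, hv⟩ : ∃ v, v ∉ D' := by
      by_contra! hcon
      exact hne (eq_top_iff.2 fun x _ => hcon x)
    refine ⟨D' ⊔ Submodule.span ℝ {v}, hD.trans le_sup_left, ?_⟩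
    have hlt : D' < D' ⊔ Submodule.span ℝ {v} := by
      refine lt_of_le_of_ne le_sup_left fun h => hv ?_
      rw [h]
      exact Submodule.mem_sup_right (Submodule.mem_span_singleton_self v)
    have h3 := Submodule.finrank_lt_finrank_of_lt hlt
    have h4 := Submodule.finrank_add_le_finrank_add_finrank D' (Submodule.span ℝ {v})
    have h5 := finrank_span_le_card (R := ℝ) ({v} : Set E4)
    simp at h5
    omega

theorem exists_ext_affine (A : AffineSubspace ℝ E4) (hA : (A : Set E4).Nonempty) (m : ℕ)
    (h1 : Module.finrank ℝ A.direction ≤ m) (h2 : m ≤ 4) :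
    ∃ V : AffineSubspace ℝ E4, A ≤ V ∧ Module.finrank ℝ V.direction = m := by
  obtain ⟨D, hD, hr⟩ := exists_ext_submodule _ m h1 h2
  obtain ⟨x, hx⟩ := hA
  refine ⟨AffineSubspace.mk' x D, ?_, by rw [AffineSubspace.direction_mk', hr]⟩
  intro y hy
  rw [AffineSubspace.mem_mk']
  exact hD (AffineSubspace.vsub_mem_direction hy hx)

/-- It suffices to find a subspace of small dimension. -/
theorem finish_aux (β : ℝ) (m : ℕ) (hm : m ≤ 4) (F : Set E4) (A : AffineSubspace ℝ E4)
    (hA : (A : Set E4).Nonempty) (h1 : Module.finrank ℝ A.direction ≤ m)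
    (hF : ∀ x ∈ F, Metric.infDist x (A : Set E4) ≤ 2 * β) :
    ∃ V : AffineSubspace ℝ E4, (V : Set E4).Nonempty ∧
      Module.finrank ℝ V.direction = m ∧
      ∀ x ∈ F, Metric.infDist x (V : Set E4) ≤ 2 * β := by
  obtain ⟨V, hAV, hr⟩ := exists_ext_affine A hA m h1 hm
  exact ⟨V, hA.mono hAV, hr, fun x hx =>
    (Metric.infDist_le_infDist_of_subset hAV hA).trans (hF x hx)⟩

theorem stmt_0 (β : ℝ) (hβ : 0 < β) (k : ℕ) (hk1 : 1 ≤ k) (hk4 : k ≤ 4)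
    (F : Set E4) (hF : Bornology.IsBounded F) (h : ¬ BetaSpans F β k) :
    ∃ V : AffineSubspace ℝ E4, (V : Set E4).Nonempty ∧
      Module.finrank ℝ V.direction = k - 1 ∧
      ∀ x ∈ F, Metric.infDist x (V : Set E4) ≤ 2 * β := by
  classical
  obtain ⟨n, rfl⟩ : ∃ n, k = n + 1 := ⟨k - 1, by omega⟩
  simp only [Nat.add_sub_cancel]
  rcases F.eq_empty_or_nonempty with rfl | hFne
  · exact finish_aux β n (by omega) ∅ (AffineSubspace.mk' 0 ⊥) ⟨0, by simp⟩
      (by rw [AffineSubspace.direction_mk', finrank_bot]; omega) (by simp)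
  by_cases hz : ∀ p : Fin (n + 1 + 1) → E4, (∀ i, p i ∈ F) → (bGram p).det = 0
  · obtain ⟨t, htF, hspan, hind⟩ := exists_affineIndependent ℝ E4 F
    have hsub : F ⊆ affineSpan ℝ t := by rw [hspan]; exact subset_affineSpan ℝ F
    have : Finite t := finite_of_fin_dim_affineIndependent ℝ hind
    have : Fintype t := Fintype.ofFinite t
    have hcard : Fintype.card t ≤ n + 1 := by
      by_contra! hcon
      have : Nonempty (Fin (n + 1 + 1) ↪ t) :=
        Function.Embedding.nonempty_of_card_le (by simpa using hcon)
      obtain ⟨f⟩ := this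
      exact bGram_det_ne _ (hind.comp_embedding f) (hz _ fun i => htF (f i).2)
    have hne : (affineSpan ℝ t : Set E4).Nonempty := hFne.mono hsub
    have htne : t.Nonempty := (affineSpan_nonempty ℝ).1 hne
    have : Nonempty t := htne.to_subtype
    refine finish_aux β n (by omega) F (affineSpan ℝ t) hne ?_ ?_
    · have := finrank_vectorSpan_range_add_one_le ℝ ((↑) : t → E4)
      rw [Subtype.range_coe] at this
      rw [direction_affineSpan]
      have h6 := this.trans hcard
      exact Nat.le_of_succ_le_succ h6
    · intro x hx
      rw [Metric.infDist_zero_of_mem (hsub hx)]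
      positivity
  · push Not at hz
    obtain ⟨p0, hp0F, hp0⟩ := hz
    set S : Set ℝ := (fun p : Fin (n + 1 + 1) → E4 => |(bGram p).det|) ''
      {p | ∀ i, p i ∈ F} with hS
    have hbdd : BddAbove S := by
      have hK : IsCompact (Set.pi Set.univ fun _ : Fin (n + 1 + 1) => closure F) :=
        isCompact_univ_pi fun _ => hF.isCompact_closure
      refine (hK.bddAbove_image (bGram_continuous _).abs.continuousOn).mono ?_
      refine Set.image_mono fun p hp => ?_
      exact fun i _ => subset_closure (hp i)
    have hpos : 0 < sSup S :=
      (abs_pos.2 hp0).trans_le (le_csSup hbdd ⟨p0, hp0F, rfl⟩)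
    obtain ⟨_, ⟨p, hpF, rfl⟩, hp⟩ := exists_lt_of_lt_csSup
      (s := S) (b := sSup S / 4) ⟨_, p0, hp0F, rfl⟩ (by linarith)
    have hj : ∃ j, Metric.infDist (p j)
      ((affineSpan ℝ (p '' ({j}ᶜ)) : AffineSubspace ℝ E4) : Set E4) < β := by
      by_contra! hcon
      exact h ⟨p, hpF, hcon⟩
    obtain ⟨j, hj⟩ := hj
    obtain ⟨b, hb⟩ := exists_ne j
    have himg : ∀ x, (Function.update p j x) '' ({j}ᶜ) = p '' ({j}ᶜ) := by
      intro x
      refine Set.image_congr fun i hi => ?_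
      exact Function.update_of_ne hi _ _
    refine finish_aux β n (by omega) F (affineSpan ℝ (p '' ({j}ᶜ)))
      ⟨p b, subset_affineSpan ℝ _ ⟨b, hb, rfl⟩⟩ ?_ ?_
    · rw [direction_affineSpan]
      have := finrank_vectorSpan_image_finset_le ℝ p (Finset.univ.erase j) (n := n) (by simp)
      have himg2 : ((Finset.image p (Finset.univ.erase j) : Finset E4) : Set E4)
          = p '' ({j}ᶜ) := by
        ext z; simp
      rwa [himg2] at this
    · intro x hx
      have hx1 : |(bGram (Function.update p j x)).det| ≤ sSup S := by
        refine le_csSup hbdd ⟨_, fun i => ?_, rfl⟩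
        by_cases hi : i = j
        · subst hi; simpa using hx
        · rw [Function.update_of_ne hi]; exact hpF i
      rw [bGram_det _ j b hb, bCof_update, himg, Function.update_self, abs_mul,
        abs_of_nonneg (sq_nonneg _)] at hx1
      simp only [] at hp
      rw [bGram_det _ j b hb, abs_mul, abs_of_nonneg (sq_nonneg _)] at hp
      set d := Metric.infDist (p j) (affineSpan ℝ (p '' ({j}ᶜ)) : Set E4)
      set e := Metric.infDist x (affineSpan ℝ (p '' ({j}ᶜ)) : Set E4)
      have hd0 : 0 ≤ d := Metric.infDist_nonneg
      by_contra! hcon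
      have h1 : d ^ 2 * 4 ≤ e ^ 2 := by nlinarith
      have h2 := mul_le_mul_of_nonneg_right h1 (abs_nonneg (bCof p j))
      linarith
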